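/- Let q be the Fibonacci Quilt sequence. For all n ≥ 7, 2·q(n) = q(n+2) + q(n-5). -/

import Mathlib

theorem stmt_2 (q : ℕ → ℤ)
    (h1 : q 1 = 1) (h2 : q 2 = 2) (h3 : q 3 = 3) (h4 : q 4 = 4)
    (h5 : q 5 = 5) (h6 : q 6 = 7) (h7 : q 7 = 9)
    (hrec : ∀ n ≥ 7, q (n + 1) = q (n - 1) + q (n - 2)) :
    ∀ n ≥ 7, 2 * q n = q (n + 2) + q (n - 5) := by
  have add_five (m : ℕ) : q (m + 5) = q (m + 3) + q (m + 2) := by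
    match m with
    | 0 => norm_num [h2, h3, h5]
    | 1 => norm_num [h3, h4, h6]
    | 2 => norm_num [h4, h5, h7]
    | k + 3 => exact hrec (k + 7) (by omega)
  have key (m : ℕ) : 2 * q (m + 7) = q (m + 9) + q (m + 2) := by
    induction m using Nat.strong_induction_on with
    | _ m ih =>
      match m with
      | 0 => linarith [add_five 4]
      | 1 => linarith [add_five 3, add_five 5]
      | 2 => linarith [add_five 3, add_five 4, add_five 6]
      | k + 3 =>
        linarith [ih k (by omega), ih (k + 1) (by omega), add_five (k + 5), add_five (k + 7), add_five k]
  intro n hn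
  obtain ⟨m, rfl⟩ := Nat.exists_eq_add_of_le' hn
  exact key m
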